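/- arXiv:1505.02332 — 3 statements merged into one kernel-verified Lean document; each statement's English description precedes it below -/
import Mathlib

section
/- For every index i with 1 ≤ i ≤ d and every polynomial q ∈ Q₁, the integral ∫_K (3(x_i − c_i)² − h_i²)·q(x) dx equals 0. -/
open MvPolynomial MeasureTheory

/-- `Q₁`: the span of the monomials `x^α` with `α i ≤ 1` for every `i`. -/
noncomputable def Q1 (d : ℕ) : Submodule ℝ (MvPolynomial (Fin d) ℝ) :=
  Submodule.span ℝ {p | ∃ α : Fin d →₀ ℕ, (∀ i, α i ≤ 1) ∧ p = monomial α (1 : ℝ)}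

/-- The Adini shape function space `P_A = Q₁ + span{x_i² q : 1 ≤ i ≤ d, q ∈ Q₁}`. -/
noncomputable def PA (d : ℕ) : Submodule ℝ (MvPolynomial (Fin d) ℝ) :=
  Q1 d ⊔ Submodule.span ℝ {p | ∃ i : Fin d, ∃ q ∈ Q1 d, p = X i ^ 2 * q}

/-- `Q₁^i`: elements of `Q₁` of degree 0 in `x_i`. -/
noncomputable def Q1i (d : ℕ) (i : Fin d) : Submodule ℝ (MvPolynomial (Fin d) ℝ) :=
  Submodule.span ℝ
    {p | ∃ α : Fin d →₀ ℕ, (∀ j, α j ≤ 1) ∧ α i = 0 ∧ p = monomial α (1 : ℝ)}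

/-- `S^i = span{((x_j − c_j)² − h_j²) q̂ : 1 ≤ j ≤ d, q̂ ∈ Q₁^i}`. -/
noncomputable def Si (d : ℕ) (c h : Fin d → ℝ) (i : Fin d) :
    Submodule ℝ (MvPolynomial (Fin d) ℝ) :=
  Submodule.span ℝ
    {p | ∃ j : Fin d, ∃ q ∈ Q1i d i, p = ((X j - C (c j)) ^ 2 - C (h j ^ 2)) * q}

/-- The vertices of the `d`-rectangle with centre `c` and half-lengths `h`. -/
def IsVertex {d : ℕ} (c h : Fin d → ℝ) (a : Fin d → ℝ) : Prop :=
  ∀ i, a i = c i - h i ∨ a i = c i + h i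

/-- The `d`-rectangle `K = ∏_i [c_i − h_i, c_i + h_i]`. -/
def box {d : ℕ} (c h : Fin d → ℝ) : Set (Fin d → ℝ) :=
  Set.univ.pi fun i => Set.Icc (c i - h i) (c i + h i)

/-- The iterated partial derivative `∂^α`. -/
noncomputable def pderivPow {d : ℕ} (α : Fin d → ℕ) :
    MvPolynomial (Fin d) ℝ →ₗ[ℝ] MvPolynomial (Fin d) ℝ :=
  (List.ofFn fun i : Fin d =>
    ((pderiv (R := ℝ) i).toLinearMap :
        Module.End ℝ (MvPolynomial (Fin d) ℝ)) ^ α i).prod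

theorem integral_one_dim (c h : ℝ) (hh : 0 < h) (a : ℕ) (ha : a ≤ 1) :
    ∫ x in Set.Icc (c - h) (c + h), (3 * (x - c) ^ 2 - h ^ 2) * x ^ a = 0 := by
  rw [integral_Icc_eq_integral_Ioc, ← intervalIntegral.integral_of_le (by linarith)]
  have hint : IntervalIntegrable (fun x : ℝ => (3 * (x - c) ^ 2 - h ^ 2) * x ^ a) volume
      (c - h) (c + h) := Continuous.intervalIntegrable (by fun_prop) _ _
  have hs : ∀ x : ℝ, HasDerivAt (fun y : ℝ => y - c) 1 x := fun x => (hasDerivAt_id x).sub_const c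
  have h0 : ∀ x : ℝ, HasDerivAt (fun y : ℝ => (y - c) ^ 3 - h ^ 2 * (y - c))
      (3 * (x - c) ^ 2 - h ^ 2) x := by
    intro x
    convert! ((hs x).pow 3).sub ((hs x).const_mul (h ^ 2)) using 1
    norm_num
  interval_cases a
  · rw [intervalIntegral.integral_eq_sub_of_hasDerivAt
      (f := fun y : ℝ => (y - c) ^ 3 - h ^ 2 * (y - c)) _ hint]
    · ring
    · intro x _
      simpa using h0 x
  · rw [intervalIntegral.integral_eq_sub_of_hasDerivAt
      (f := fun y : ℝ => (3 / 4 * (y - c) ^ 4 - h ^ 2 / 2 * (y - c) ^ 2)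
        + c * ((y - c) ^ 3 - h ^ 2 * (y - c))) _ hint]
    · ring
    · intro x _
      convert! ((((hs x).pow 4).const_mul (3 / 4)).sub
        (((hs x).pow 2).const_mul (h ^ 2 / 2))).add ((h0 x).const_mul c) using 1
      norm_num
      ring

theorem integral_monomial_box (d : ℕ) (c h : Fin d → ℝ) (hh : ∀ i, 0 < h i) (i : Fin d)
    (α : Fin d →₀ ℕ) (hα : ∀ j, α j ≤ 1) :
    ∫ x in box c h, eval x ((3 * (X i - C (c i)) ^ 2 - C (h i ^ 2)) * monomial α (1 : ℝ)) = 0 := by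
  have key : ∀ x : Fin d → ℝ,
      eval x ((3 * (X i - C (c i)) ^ 2 - C (h i ^ 2)) * monomial α (1 : ℝ))
      = ∏ j, (fun (j : Fin d) (t : ℝ) =>
          (if j = i then 3 * (t - c i) ^ 2 - h i ^ 2 else 1) * t ^ α j) j (x j) := by
    intro x
    simp only [Finset.prod_mul_distrib, Finset.prod_ite_eq', Finset.mem_univ, if_true]
    simp [eval_monomial, Finsupp.prod_fintype]
  simp_rw [key]
  rw [box, volume_pi, Measure.restrict_pi_pi]
  refine (integral_fintype_prod_eq_prod (fun (j : Fin d) (t : ℝ) =>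
    (if j = i then 3 * (t - c i) ^ 2 - h i ^ 2 else 1) * t ^ α j)).trans ?_
  apply Finset.prod_eq_zero (Finset.mem_univ i)
  simpa using integral_one_dim (c i) (h i) (hh i) (α i) (hα i)

theorem integrableOn_eval_box (d : ℕ) (c h : Fin d → ℝ) (p : MvPolynomial (Fin d) ℝ) :
    IntegrableOn (fun x => eval x p) (box c h) := by
  apply ContinuousOn.integrableOn_compact
  · exact isCompact_univ_pi fun i => isCompact_Icc
  · exact (MvPolynomial.continuous_eval p).continuousOn

/-- for every `i` and every `q ∈ Q₁`,
`∫_K (3(x_i − c_i)² − h_i²) q(x) dx = 0`. -/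
theorem integral_orthogonality (d : ℕ) (hd : 1 ≤ d)
    (c h : Fin d → ℝ) (hh : ∀ i, 0 < h i) (i : Fin d)
    (q : MvPolynomial (Fin d) ℝ) (hq : q ∈ Q1 d) :
    ∫ x in box c h, eval x ((3 * (X i - C (c i)) ^ 2 - C (h i ^ 2)) * q) = 0 := by
  induction hq using Submodule.span_induction with
  | mem p hp =>
    obtain ⟨α, hα, rfl⟩ := hp
    exact integral_monomial_box d c h hh i α hα
  | zero => simp
  | add p r _ _ hp hr =>
    simp_rw [mul_add, map_add]
    rw [integral_add (integrableOn_eval_box d c h _) (integrableOn_eval_box d c h _), hp, hr,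
      add_zero]
  | smul a p _ hp =>
    simp_rw [mul_smul_comm, smul_eval]
    rw [integral_const_mul, hp, mul_zero]
end

section
/- (Two-dimensional face expansion) Let d = 2, so K = [c_1 − h_1, c_1 + h_1] × [c_2 − h_2, c_2 + h_2]. Let w ∈ P_A and let q ∈ Q₁ agree with ∂w/∂x_1 at all four vertices of K. Then for either sign ± and every x_2 ∈ ℝ, (∂w/∂x_1 − q)(c_1 ± h_1, x_2) = (1/2)·((x_2 − c_2)² − h_2²)·( (1/|K|) ∫_K ∂³w/∂x_1∂x_2² dx ) + (1/6)·((x_2 − c_2)³ − h_2²(x_2 − c_2))·∂⁴w/∂x_1∂x_2³, where |K| = 4h_1h_2 and ∂⁴w/∂x_1∂x_2³ is a constant. -/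
open MvPolynomial MeasureTheory

theorem Q1_explicit (q : MvPolynomial (Fin 2) ℝ) (hq : q ∈ Q1 2) :
    ∃ a b e f : ℝ, q = C a + C b * X 0 + C e * X 1 + C f * (X 0 * X 1) := by
  unfold Q1 at hq
  induction hq using Submodule.span_induction with
  | mem p hp =>
    obtain ⟨α, hα, rfl⟩ := hp
    have h0 := hα 0
    have h1 := hα 1
    have key : monomial α (1 : ℝ) = X 0 ^ α 0 * X 1 ^ α 1 := by
      rw [monomial_eq, Finsupp.prod_fintype _ _ (by simp)]
      simp [Fin.prod_univ_two]
    rw [key]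
    generalize α 0 = m at *
    generalize α 1 = n at *
    interval_cases m <;> interval_cases n
    · exact ⟨1, 0, 0, 0, by simp⟩
    · exact ⟨0, 0, 1, 0, by simp⟩
    · exact ⟨0, 1, 0, 0, by simp⟩
    · exact ⟨0, 0, 0, 1, by simp⟩
  | zero => exact ⟨0, 0, 0, 0, by simp⟩
  | add p r _ _ hp hr =>
    obtain ⟨a, b, e, f, rfl⟩ := hp
    obtain ⟨a', b', e', f', rfl⟩ := hr
    exact ⟨a + a', b + b', e + e', f + f', by simp only [C_add]; ring⟩
  | smul t p _ hp =>
    obtain ⟨a, b, e, f, rfl⟩ := hp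
    exact ⟨t * a, t * b, t * e, t * f, by simp only [smul_eq_C_mul, C_mul]; ring⟩

theorem PA_explicit (w : MvPolynomial (Fin 2) ℝ) (hw : w ∈ PA 2) :
    ∃ q ∈ Q1 2, ∃ r ∈ Q1 2, ∃ t ∈ Q1 2, w = q + X 0 ^ 2 * r + X 1 ^ 2 * t := by
  unfold PA at hw
  obtain ⟨q, hq, p, hp, rfl⟩ := Submodule.mem_sup.1 hw
  clear hw
  suffices hs : ∃ r ∈ Q1 2, ∃ t ∈ Q1 2, p = X 0 ^ 2 * r + X 1 ^ 2 * t by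
    obtain ⟨r, hr, t, ht, rfl⟩ := hs
    exact ⟨q, hq, r, hr, t, ht, by ring⟩
  induction hp using Submodule.span_induction with
  | mem p hp =>
    obtain ⟨i, r, hr, rfl⟩ := hp
    fin_cases i
    · exact ⟨r, hr, 0, zero_mem _, by simp⟩
    · exact ⟨0, zero_mem _, r, hr, by simp⟩
  | zero => exact ⟨0, zero_mem _, 0, zero_mem _, by simp⟩
  | add p r _ _ hp hr =>
    obtain ⟨a, ha, b, hb, rfl⟩ := hp
    obtain ⟨a', ha', b', hb', rfl⟩ := hr
    exact ⟨_, add_mem ha ha', _, add_mem hb hb', by ring⟩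
  | smul t p _ hp =>
    obtain ⟨a, ha, b, hb, rfl⟩ := hp
    exact ⟨_, Submodule.smul_mem _ t ha, _, Submodule.smul_mem _ t hb, by
      simp only [smul_eq_C_mul]; ring⟩

theorem box_integral (c h : Fin 2 → ℝ) (hh : ∀ i, 0 < h i) (A B : ℝ) :
    ∫ x in box c h, (A + B * x 1) = 4 * h 0 * h 1 * (A + B * c 1) := by
  have h0 := hh 0
  have h1 := hh 1
  unfold box
  rw [volume_pi, Measure.restrict_pi_pi]
  have := integral_fintype_prod_eq_prod (𝕜 := ℝ) (ι := Fin 2) (E := fun _ => ℝ)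
    (μ := fun i => (volume : Measure ℝ).restrict (Set.Icc (c i - h i) (c i + h i)))
    (![fun _ => 1, fun y => A + B * y])
  simp only [Fin.prod_univ_two, Matrix.cons_val_zero, Matrix.cons_val_one, one_mul] at this
  rw [this, integral_Icc_eq_integral_Ioc, integral_Icc_eq_integral_Ioc,
    ← intervalIntegral.integral_of_le (by linarith),
    ← intervalIntegral.integral_of_le (by linarith),
    intervalIntegral.integral_add (by simp) (Continuous.intervalIntegrable (by fun_prop) _ _)]
  have hB : ∫ y in (c 1 - h 1)..(c 1 + h 1), B * y = B * (2 * c 1 * h 1) := by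
    rw [intervalIntegral.integral_const_mul, integral_id]
    ring
  rw [hB]
  simp only [intervalIntegral.integral_const, smul_eq_mul]
  ring

/-- two-dimensional face expansion: for `d = 2`, `w ∈ P_A` and `q ∈ Q₁`
the vertex interpolant of `∂w/∂x₁`, on the faces `x₁ = c₁ ± h₁` one has
`(∂w/∂x₁ − q)(c₁ ± h₁, x₂) = (1/2)((x₂−c₂)² − h₂²)·avg_K(∂³w/∂x₁∂x₂²)
+ (1/6)((x₂−c₂)³ − h₂²(x₂−c₂))·∂⁴w/∂x₁∂x₂³`, where `∂⁴w/∂x₁∂x₂³` is a constant. -/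
theorem adini_face_expansion_2d (c h : Fin 2 → ℝ) (hh : ∀ i, 0 < h i)
    (w : MvPolynomial (Fin 2) ℝ) (hw : w ∈ PA 2)
    (q : MvPolynomial (Fin 2) ℝ) (hq : q ∈ Q1 2)
    (hagree : ∀ a : Fin 2 → ℝ, IsVertex c h a → eval a q = eval a (pderiv 0 w)) :
    ∃ D : ℝ, pderiv 0 (pderiv 1 (pderiv 1 (pderiv 1 w))) = C D ∧
      ∀ s : ℝ, s = 1 ∨ s = -1 → ∀ x₂ : ℝ,
        eval ![c 0 + s * h 0, x₂] (pderiv 0 w - q) =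
          (1 / 2) * ((x₂ - c 1) ^ 2 - h 1 ^ 2) *
            ((1 / (4 * h 0 * h 1)) *
              ∫ x in box c h, eval x (pderiv 0 (pderiv 1 (pderiv 1 w)))) +
          (1 / 6) * ((x₂ - c 1) ^ 3 - h 1 ^ 2 * (x₂ - c 1)) * D := by
  have h0 := hh 0
  have h1 := hh 1
  obtain ⟨u, hu, r, hr, t, ht, rfl⟩ := PA_explicit w hw
  obtain ⟨q₀, q₁, q₂, q₃, rfl⟩ := Q1_explicit q hq
  obtain ⟨u₀, u₁, u₂, u₃, rfl⟩ := Q1_explicit u hu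
  obtain ⟨r₀, r₁, r₂, r₃, rfl⟩ := Q1_explicit r hr
  obtain ⟨t₀, t₁, t₂, t₃, rfl⟩ := Q1_explicit t ht
  have e10 : pderiv (R := ℝ) (1 : Fin 2) (X 0) = 0 := pderiv_X_of_ne (by decide)
  have e01 : pderiv (R := ℝ) (0 : Fin 2) (X 1) = 0 := pderiv_X_of_ne (by decide)
  have two (i : Fin 2) : pderiv (R := ℝ) i 2 = 0 := by
    rw [show (2 : MvPolynomial (Fin 2) ℝ) = C 2 from (map_ofNat C 2).symm]; exact pderiv_C
  have three : (C 6 : MvPolynomial (Fin 2) ℝ) = 6 := map_ofNat C 6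
  have ctwo : (C 2 : MvPolynomial (Fin 2) ℝ) = 2 := map_ofNat C 2
  set w : MvPolynomial (Fin 2) ℝ := C u₀ + C u₁ * X 0 + C u₂ * X 1 + C u₃ * (X 0 * X 1)
    + X 0 ^ 2 * (C r₀ + C r₁ * X 0 + C r₂ * X 1 + C r₃ * (X 0 * X 1))
    + X 1 ^ 2 * (C t₀ + C t₁ * X 0 + C t₂ * X 1 + C t₃ * (X 0 * X 1)) with hwdef
  have d1 : pderiv 1 w = C u₂ + C u₃ * X 0 + X 0 ^ 2 * (C r₂ + C r₃ * X 0)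
      + C 2 * X 1 * (C t₀ + C t₁ * X 0 + C t₂ * X 1 + C t₃ * (X 0 * X 1))
      + X 1 ^ 2 * (C t₂ + C t₃ * X 0) := by
    rw [hwdef]
    simp [pderiv_mul, pderiv_pow, e10, ctwo]
    ring
  have d2 : pderiv 1 (pderiv 1 w) = C 2 * (C t₀ + C t₁ * X 0)
      + C 6 * (C t₂ + C t₃ * X 0) * X 1 := by
    rw [d1]
    simp [pderiv_mul, pderiv_pow, e10, ctwo, three, two]
    ring
  have d3 : pderiv 1 (pderiv 1 (pderiv 1 w)) = C 6 * (C t₂ + C t₃ * X 0) := by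
    rw [d2]
    simp [pderiv_mul, pderiv_C, e10]
  have d4 : pderiv 0 (pderiv 1 (pderiv 1 (pderiv 1 w))) = C (6 * t₃) := by
    rw [d3]
    simp [pderiv_mul, pderiv_C]
  have d20 : pderiv 0 (pderiv 1 (pderiv 1 w)) = C (2 * t₁) + C (6 * t₃) * X 1 := by
    rw [d2]
    simp [pderiv_mul, pderiv_C, e01]
    ring
  have ev (a : Fin 2 → ℝ) : eval a (pderiv 0 w) = u₁ + u₃ * a 1
      + 2 * a 0 * (r₀ + r₁ * a 0 + r₂ * a 1 + r₃ * (a 0 * a 1))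
      + a 0 ^ 2 * (r₁ + r₃ * a 1) + a 1 ^ 2 * (t₁ + t₃ * a 1) := by
    rw [hwdef]
    simp [pderiv_mul, pderiv_pow, e01]
    ring
  refine ⟨6 * t₃, d4, ?_⟩
  intro s hs x₂
  have hint : ∫ x in box c h, eval x (pderiv 0 (pderiv 1 (pderiv 1 w)))
      = 4 * h 0 * h 1 * (2 * t₁ + 6 * t₃ * c 1) := by
    rw [d20, ← box_integral c h hh]
    simp
  have hav : (1 / (4 * h 0 * h 1)) * (4 * h 0 * h 1 * (2 * t₁ + 6 * t₃ * c 1))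
      = 2 * t₁ + 6 * t₃ * c 1 := by
    field_simp
  rw [hint, hav]
  have hp := hagree ![c 0 + s * h 0, c 1 + h 1] (by
    intro i; fin_cases i
    · rcases hs with rfl | rfl <;> simp [sub_eq_add_neg]
    · simp)
  have hm := hagree ![c 0 + s * h 0, c 1 - h 1] (by
    intro i; fin_cases i
    · rcases hs with rfl | rfl <;> simp [sub_eq_add_neg]
    · simp)
  rw [ev] at hp hm
  rw [eval_sub, ev]
  simp only [eval_add, eval_mul, eval_C, eval_X, Matrix.cons_val_zero, Matrix.cons_val_one]
    at hp hm ⊢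
  generalize c 0 + s * h 0 = z at *
  have h1' : h 1 ≠ 0 := h1.ne'
  apply mul_left_cancel₀ (mul_ne_zero two_ne_zero h1')
  linear_combination (-(x₂ - c 1 + h 1)) * hp - (c 1 + h 1 - x₂) * hm
end

section
/- (Remark 3.2, conclusion) Let d ≥ 2 and let u : ℝ^d → ℝ be a continuously differentiable function of the form u(x) = Σ_{1 ≤ i < j ≤ d} c_{ij}·x_i·x_j + Σ_{i=1}^d g_i(x_i), where c_{ij} are real constants and g_i : ℝ → ℝ are continuously differentiable. If u = 0 and ∇u = 0 at every point of the boundary of the unit cube [0,1]^d, then u vanishes identically on [0,1]^d. -/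
/-- Remark 3.2, conclusion: if `u(x) = Σ_{i<j} c_{ij} x_i x_j + Σ_i g_i(x_i)`
with the `g_i` continuously differentiable, and `u` and `∇u` vanish at every boundary
point of the unit cube `[0,1]^d` (`d ≥ 2`), then `u` vanishes identically on `[0,1]^d`. -/
theorem special_form_vanishing_on_cube (d : ℕ) (hd : 2 ≤ d)
    (cc : Fin d → Fin d → ℝ) (g : Fin d → ℝ → ℝ) (hg : ∀ i, ContDiff ℝ 1 (g i))
    (u : (Fin d → ℝ) → ℝ)
    (hu : ∀ x, u x =
      (∑ i : Fin d, ∑ j : Fin d, if i < j then cc i j * x i * x j else 0) +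
        ∑ i : Fin d, g i (x i))
    (hb : ∀ x ∈ Set.univ.pi fun _ : Fin d => Set.Icc (0 : ℝ) 1,
      (∃ i, x i = 0 ∨ x i = 1) →
        u x = 0 ∧ ∀ k : Fin d, fderiv ℝ u x (Pi.single k 1) = 0) :
    ∀ x ∈ Set.univ.pi fun _ : Fin d => Set.Icc (0 : ℝ) 1, u x = 0 := by
  have hd0 : 0 < d := by omega
  have hu0 : ∑ i : Fin d, g i 0 = 0 := by
    have h := (hb (fun _ => 0) (by intro i _; simp) ⟨⟨0, hd0⟩, Or.inl rfl⟩).1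
    rw [hu] at h
    simpa using h
  have hgc : ∀ (a : Fin d) (t : ℝ), t ∈ Set.Icc (0 : ℝ) 1 → g a t = g a 0 := by
    intro a t ht
    have : Nontrivial (Fin d) := Fin.nontrivial_iff_two_le.mpr hd
    obtain ⟨b, hba⟩ := exists_ne a
    have h := (hb (fun k => if k = a then t else 0)
      (by intro i _
          by_cases hi : i = a
          · simpa [hi] using ht
          · simp [hi]) ⟨b, Or.inl (by simp [hba])⟩).1
    rw [hu] at h
    have h1 : (∑ i : Fin d, ∑ j : Fin d, if i < j then
        cc i j * (if i = a then t else 0) * (if j = a then t else 0) else 0) = 0 := by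
      refine Finset.sum_eq_zero fun i _ => Finset.sum_eq_zero fun j _ => ?_
      split_ifs with h1 h2 h3 <;> simp
      subst h2; subst h3; exact absurd h1 (lt_irrefl _)
    rw [h1, zero_add] at h
    rw [← Finset.add_sum_erase _ _ (Finset.mem_univ a)] at h hu0
    have h2 : ∑ i ∈ Finset.univ.erase a, g i (if i = a then t else 0)
        = ∑ i ∈ Finset.univ.erase a, g i 0 :=
      Finset.sum_congr rfl fun i hi => by rw [if_neg (Finset.ne_of_mem_erase hi)]
    rw [h2, if_pos rfl] at h
    linarith
  have hgs : ∀ x ∈ Set.univ.pi fun _ : Fin d => Set.Icc (0 : ℝ) 1,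
      ∑ i : Fin d, g i (x i) = 0 := by
    intro x hx
    rw [← hu0]
    exact Finset.sum_congr rfl fun i _ => hgc i _ (hx i trivial)
  have hc : ∀ a b : Fin d, a < b → cc a b = 0 := by
    intro a b hab
    have hx : (fun k => if k = a ∨ k = b then (1 : ℝ) else 0) ∈
        Set.univ.pi fun _ : Fin d => Set.Icc (0 : ℝ) 1 := by
      intro i _
      by_cases hi : i = a ∨ i = b <;> simp [hi]
    have h := (hb _ hx ⟨a, Or.inr (by simp)⟩).1
    rw [hu, hgs _ hx, add_zero, Finset.sum_eq_single a, Finset.sum_eq_single b] at h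
    · simpa [hab] using h
    · intro j _ hj
      by_cases hja : j = a
      · simp [hja]
      · simp [hja, hj]
    · simp
    · intro i _ hi
      refine Finset.sum_eq_zero fun j _ => ?_
      by_cases hib : i = b
      · subst hib
        by_cases hj : j = a ∨ j = i
        · have : ¬ i < j := by
            rcases hj with rfl | rfl
            · exact not_lt.mpr hab.le
            · exact lt_irrefl _
          simp [this]
        · simp [hj]
      · simp [hi, hib]
    · simp
  intro x hx
  rw [hu, hgs x hx, add_zero]
  refine Finset.sum_eq_zero fun i _ => Finset.sum_eq_zero fun j _ => ?_
  split_ifs with h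
  · simp [hc i j h]
  · rfl
end
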